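/- arXiv:2107.02705 — 2 statements merged into one kernel-verified Lean document; each statement's English description precedes it below -/
import Mathlib

section
/- Suppose n ≥ 3, |M| ≥ 2, and M is normal, meaning that for each p ∈ M the n−1 vectors v(i,p), i ≠ p, are R-linearly independent. Let X be the free R-module with basis {x(i,j) : (i,j) ∈ D} and let Λ : X → S be the R-module homomorphism sending x(i,j) to v(i,j) (an epimorphism). Let Y ⊆ X be the R-span of the elements y(i,j,k) = a_k·x(i,j) − a_j·x(i,k) + a_i·x(j,k) for (i,j,k) ∈ E. Then ker Λ = Y; that is, the relations a_k v(i,j) − a_j v(i,k) + a_i v(j,k) = 0 for (i,j,k) ∈ E are defining relations for S on the generators B_M. -/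
/-- Theorem `rela`: if `M` is normal, the relations
`a_k v(i,j) − a_j v(i,k) + a_i v(j,k) = 0`, for `(i,j,k) ∈ E`, are defining
relations for `S` on the generators `B_M`; i.e. `ker Λ = Y`. -/
theorem stmt_1 {R : Type*} [Ring R] [Nontrivial R]
    {n : ℕ} (hn : 3 ≤ n) (a : Fin n → R)
    (hcen : ∀ i, a i ∈ Set.center R)
    (huni : Ideal.span (Set.range a) = ⊤)
    (S : Submodule R (Fin n → R))
    (hS : ∀ x, x ∈ S ↔ ∑ i, a i * x i = 0)
    (v : Fin n → Fin n → Fin n → R)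
    (hv : ∀ i j k, v i j k = if k = i then -a j else if k = j then a i else 0)
    (M : Finset (Fin n)) (hMcard : 2 ≤ M.card)
    (hM : Ideal.span (a '' (M : Set (Fin n))) = ⊤)
    (hnormal : ∀ p ∈ M, LinearIndependent R (fun i : {i : Fin n // i ≠ p} => v i.1 p))
    (D : Set (Fin n × Fin n))
    (hD : D = {q | q.1 < q.2 ∧ (q.1 ∈ M ∨ q.2 ∈ M)})
    (Λ : (D → R) →ₗ[R] (Fin n → R))
    (hΛ : ∀ d : D, Λ (fun e => if e = d then 1 else 0) = v (d : Fin n × Fin n).1 (d : Fin n × Fin n).2)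
    (Y : Submodule R (D → R))
    (hY : Y = Submodule.span R {y | ∃ i j k : Fin n, i < j ∧ j < k ∧
      ((i ∈ M ∧ j ∈ M) ∨ (i ∈ M ∧ k ∈ M) ∨ (j ∈ M ∧ k ∈ M)) ∧
      y = fun d : D => a k * (if (d : Fin n × Fin n) = (i, j) then 1 else 0)
        - a j * (if (d : Fin n × Fin n) = (i, k) then 1 else 0)
        + a i * (if (d : Fin n × Fin n) = (j, k) then 1 else 0)}) :
    LinearMap.ker Λ = Y := by
  classical
  have hcomm : ∀ i r, a i * r = r * a i := fun i r => ((hcen i).comm r)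
  set e : Fin n → Fin n → (D → R) := fun i j d =>
    if (d : Fin n × Fin n) = (i, j) then 1 else 0 with he
  have hΛe : ∀ i j, i < j → (i ∈ M ∨ j ∈ M) → Λ (e i j) = v i j := by
    intro i j hij h
    have hm : (i, j) ∈ D := by rw [hD]; exact ⟨hij, h⟩
    have := hΛ ⟨(i, j), hm⟩
    rw [← this]
    congr 1
    funext d
    simp [he, Subtype.ext_iff]
  have hT : ∀ i j k : Fin n, i < j → j < k →
      ((i ∈ M ∧ j ∈ M) ∨ (i ∈ M ∧ k ∈ M) ∨ (j ∈ M ∧ k ∈ M)) →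
      a k • e i j - a j • e i k + a i • e j k ∈ Y := by
    intro i j k hij hjk h
    rw [hY]
    apply Submodule.subset_span
    exact ⟨i, j, k, hij, hjk, h, by funext d; simp [he]⟩
  have hYle : Y ≤ LinearMap.ker Λ := by
    rw [hY, Submodule.span_le]
    rintro y ⟨i, j, k, hij, hjk, h, rfl⟩
    have h1 : (fun d : D => a k * (if (d : Fin n × Fin n) = (i, j) then (1 : R) else 0)
        - a j * (if (d : Fin n × Fin n) = (i, k) then 1 else 0)
        + a i * (if (d : Fin n × Fin n) = (j, k) then 1 else 0))
        = a k • e i j - a j • e i k + a i • e j k := by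
      funext d; simp [he]
    have hik := hij.trans hjk
    rw [SetLike.mem_coe, LinearMap.mem_ker, h1, map_add, map_sub, map_smul, map_smul, map_smul,
      hΛe i j hij (by tauto), hΛe i k hik (by tauto), hΛe j k hjk (by tauto)]
    funext l
    simp only [Pi.add_apply, Pi.sub_apply, Pi.smul_apply, hv, smul_eq_mul, Pi.zero_apply]
    have c1 := hcomm i (a j)
    have c2 := hcomm i (a k)
    have c3 := hcomm j (a k)
    by_cases l1 : l = i
    · subst l1
      simp [hij.ne, hik.ne, c3]
    by_cases l2 : l = j
    · subst l2
      simp [hij.ne', hjk.ne, c2]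
    by_cases l3 : l = k
    · subst l3
      simp [hik.ne', hjk.ne', c1]
    simp [l1, l2, l3]
  apply le_antisymm _ hYle
  intro z hz
  set xx : Fin n → Fin n → (D → R) := fun i j => if i < j then e i j else - e j i with hxx
  have key : ∀ p ∈ M, a p • z ∈ Y := by
    intro p hp
    set W : Submodule R (D → R) :=
      Submodule.span R (Set.range (fun i : {i : Fin n // i ≠ p} => xx i.1 p)) with hW
    have hWl : ∀ i, i < p → e i p ∈ W := by
      intro i hi
      apply Submodule.subset_span
      exact ⟨⟨i, hi.ne⟩, by simp [hxx, hi]⟩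
    have hWr : ∀ i, p < i → e p i ∈ W := by
      intro i hi
      rw [← neg_neg (e p i)]
      apply Submodule.neg_mem
      apply Submodule.subset_span
      exact ⟨⟨i, hi.ne'⟩, by simp [hxx, hi.le]⟩
    have hx : ∀ i j, i < j → (i ∈ M ∨ j ∈ M) → a p • e i j ∈ Y ⊔ W := by
      intro i j hij h
      have toY : ∀ {x}, x ∈ Y → x ∈ Y ⊔ W := fun h => Submodule.mem_sup_left h
      have toW : ∀ {x} (r : R), x ∈ W → r • x ∈ Y ⊔ W :=
        fun r h => Submodule.mem_sup_right (W.smul_mem r h)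
      rcases lt_trichotomy p i with h1 | h1 | h1
      · have t := toY (hT p i j h1 hij (by tauto))
        have := Submodule.add_mem _ (Submodule.sub_mem _ t (toW (a j) (hWr i h1)))
          (toW (a i) (hWr j (h1.trans hij)))
        convert this using 1
        abel
      · subst h1
        exact toW _ (hWr j hij)
      rcases lt_trichotomy p j with h2 | h2 | h2
      · have t := toY (hT i p j h1 h2 (by tauto))
        have := Submodule.sub_mem _ (Submodule.add_mem _ (toW (a j) (hWl i h1))
          (toW (a i) (hWr j h2))) t
        convert this using 1
        abel
      · subst h2
        exact toW _ (hWl i hij)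
      · have t := toY (hT i j p hij h2 (by tauto))
        have := Submodule.sub_mem _ (Submodule.add_mem _ t (toW (a j) (hWl i h1)))
          (toW (a i) (hWl j h2))
        convert this using 1
        abel
    have hmem : a p • z ∈ Y ⊔ W := by
      have hzs : a p • z = ∑ d : D, z d • (a p • e d.1.1 d.1.2) := by
        funext d
        simp only [Finset.sum_apply, Pi.smul_apply, smul_eq_mul, he]
        rw [Finset.sum_eq_single d]
        · simp [hcomm]
        · intro b _ hb
          rw [if_neg]
          · simp
          · intro h
            exact hb (Subtype.ext h.symm)
        · simp
      rw [hzs]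
      refine Submodule.sum_mem _ fun d _ => Submodule.smul_mem _ _ ?_
      have hd : (d : Fin n × Fin n) ∈ {q : Fin n × Fin n | q.1 < q.2 ∧ (q.1 ∈ M ∨ q.2 ∈ M)} :=
        hD ▸ d.2
      exact hx _ _ hd.1 hd.2
    obtain ⟨y, hy, w, hw, hyw⟩ := Submodule.mem_sup.1 hmem
    have hΛw : Λ w = 0 := by
      have h1 : Λ y = 0 := hYle hy
      have h2 : Λ (y + w) = 0 := by
        rw [hyw, map_smul, LinearMap.mem_ker.1 hz, smul_zero]
      rwa [map_add, h1, zero_add] at h2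
    obtain ⟨c, hc⟩ := (Submodule.mem_span_range_iff_exists_fun R).1 hw
    have hxv : ∀ i : {i : Fin n // i ≠ p}, Λ (xx i.1 p) = v i.1 p := by
      rintro ⟨i, hi⟩
      rcases lt_or_gt_of_ne hi with h | h
      · simp only [hxx, if_pos h]
        exact hΛe i p h (Or.inr hp)
      · simp only [hxx, if_neg h.not_gt, map_neg]
        rw [hΛe p i h (Or.inl hp)]
        funext l
        simp only [Pi.neg_apply, hv]
        by_cases l1 : l = i
        · subst l1; simp [hi]
        by_cases l2 : l = p
        · subst l2; simp [l1]
        simp [l1, l2]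
    have hc0 : ∀ i, c i = 0 := by
      apply Fintype.linearIndependent_iff.1 (hnormal p hp) c
      rw [← hΛw, ← hc, map_sum]
      exact Finset.sum_congr rfl fun i _ => by rw [map_smul, hxv]
    have hw0 : w = 0 := by rw [← hc]; simp [hc0]
    rw [← hyw, hw0, add_zero]
    exact hy
  have hall : ∀ r ∈ Ideal.span (a '' (M : Set (Fin n))), r • z ∈ Y := by
    intro r hr
    have : Ideal.span (a '' (M : Set (Fin n))) ≤ Y.comap (LinearMap.toSpanSingleton R (D → R) z) := by
      refine Submodule.span_le.2 ?_
      rintro _ ⟨p, hp, rfl⟩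
      simpa using key p hp
    simpa using this hr
  simpa using hall 1 (by rw [hM]; trivial)
end

section
/- Suppose R is a principal ideal domain, a_1 ≠ 0, and n > 2. Set d_i = a_1·(a_1,…,a_{i+1}) / ((a_1,a_{i+1})·(a_1,…,a_i)) for 2 ≤ i ≤ n−1. Then S/U_1 is isomorphic as an R-module to R/Rd_2 ⊕ ⋯ ⊕ R/Rd_{n−1}; moreover, for every prime p of R, the p-elementary divisors of S/U_1 are the p-parts of d_2,…,d_{n−1}. -/
theorem aux_quot {R : Type*} [CommRing R] {M : Type*} [AddCommGroup M] [Module R M] {m : ℕ}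
    (d : Fin m → R) (φ : (Fin m → R) →ₗ[R] M) (hs : Function.Surjective φ)
    (hk : ∀ t, φ t = 0 ↔ ∀ i, d i ∣ t i) :
    Nonempty (M ≃ₗ[R] ((i : Fin m) → R ⧸ Ideal.span {d i})) := by
  have hker : LinearMap.ker φ = Submodule.pi Set.univ (fun i => Ideal.span {d i}) := by
    ext t
    rw [LinearMap.mem_ker, hk, Submodule.mem_pi]
    simp [Ideal.mem_span_singleton]
  exact ⟨(φ.quotKerEquivOfSurjective hs).symm.trans
    ((Submodule.quotEquivOfEq _ _ hker).trans
      (Submodule.quotientPi (fun i => (Ideal.span {d i} : Submodule R R))))⟩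

theorem aux_prim {R : Type*} [CommRing R] [IsDomain R] [IsPrincipalIdealRing R]
    {M : Type*} [AddCommGroup M] [Module R M] {m : ℕ}
    (d : Fin m → R) (hd0 : ∀ i, d i ≠ 0) (φ : (Fin m → R) →ₗ[R] M) (hs : Function.Surjective φ)
    (hk : ∀ t, φ t = 0 ↔ ∀ i, d i ∣ t i) (q : R) (hq : Prime q) (P : Submodule R M)
    (hP : ∀ x, x ∈ P ↔ ∃ s : ℕ, q ^ s • x = 0) :
    ∃ k : Fin m → ℕ, (∀ i, q ^ k i ∣ d i ∧ ¬ q ^ (k i + 1) ∣ d i) ∧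
          Nonempty (P ≃ₗ[R] ((i : Fin m) → R ⧸ Ideal.span {q ^ k i})) := by
  have h1 : ∀ i, ∃ n : ℕ, ∃ f : R, ¬ q ∣ f ∧ d i = q ^ n * f := fun i =>
    WfDvdMonoid.max_power_factor (hd0 i) hq.irreducible
  choose k f hqf hdf using h1
  have hqk : ∀ (_ : Fin m) (n : ℕ), q ^ n ≠ 0 := fun _ n => pow_ne_zero _ hq.ne_zero
  have hf0 : ∀ i, f i ≠ 0 := fun i h => hqf i (h ▸ dvd_zero q)
  refine ⟨k, fun i => ⟨⟨f i, hdf i⟩, ?_⟩, ?_⟩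
  · rintro ⟨e, he⟩
    rw [hdf i, pow_succ, mul_assoc] at he
    exact hqf i ⟨e, mul_left_cancel₀ (hqk i _) he⟩
  · let μ : (Fin m → R) →ₗ[R] (Fin m → R) :=
      LinearMap.pi (fun i => f i • LinearMap.proj i)
    have hμ : ∀ t i, μ t i = f i * t i := fun t i => rfl
    have hmem : ∀ t, (φ ∘ₗ μ) t ∈ P := by
      intro t
      rw [hP]
      refine ⟨∑ i, k i, ?_⟩
      rw [← map_smul, LinearMap.comp_apply, hk]
      intro i
      rw [hμ, hdf, Pi.smul_apply, smul_eq_mul]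
      have : q ^ k i ∣ q ^ ∑ i, k i :=
        pow_dvd_pow _ (Finset.single_le_sum (fun _ _ => Nat.zero_le _) (Finset.mem_univ i))
      obtain ⟨e, he⟩ := this
      rw [he]
      exact ⟨e * t i, by ring⟩
    refine aux_quot (fun i => q ^ k i) ((φ ∘ₗ μ).codRestrict P hmem) ?_ ?_
    · rintro ⟨x, hx⟩
      obtain ⟨s, hsx⟩ := (hP x).1 hx
      obtain ⟨t, rfl⟩ := hs x
      rw [← map_smul, hk] at hsx
      have : ∀ i, ∃ e, t i = f i * e := by
        intro i
        have h2 : f i ∣ q ^ s * t i := (Dvd.intro_left _ (hdf i).symm).trans (hsx i)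
        have h3 : IsCoprime (f i) (q ^ s) :=
          (((hq.irreducible.coprime_iff_not_dvd).2 (hqf i)).symm).pow_right
        exact h3.dvd_of_dvd_mul_left h2
      choose e he using this
      refine ⟨e, Subtype.ext ?_⟩
      show φ (μ e) = φ t
      congr 1
      funext i
      rw [hμ, he]
    · intro t
      have h4 : ((φ ∘ₗ μ).codRestrict P hmem) t = 0 ↔ φ (μ t) = 0 := by
        rw [← Subtype.coe_inj]; rfl
      rw [h4, hk]
      refine forall_congr' fun i => ?_
      rw [hμ, hdf, mul_comm (f i)]
      exact mul_dvd_mul_iff_right (hf0 i)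

theorem aux_ind {R : Type*} [CommRing R] [IsDomain R] (A : R) (hA : A ≠ 0) (b g c d l : ℕ → R)
    (w : ℕ → ℕ → R) (m : ℕ)
    (hgA : ∀ i < m, g i ∣ A) (hgb : ∀ i < m, ∀ j ≤ i, g i ∣ b j)
    (hcb : ∀ i < m, c i ∣ b (i + 1))
    (hl : ∀ i < m, ∀ z, g i ∣ z → c i ∣ z → l i ∣ z)
    (hdl : ∀ i < m, d i * l i = A)
    (hw0 : ∀ i < m, ∀ j, i + 1 < j → w i j = 0)
    (hwK : ∀ i < m, A ∣ ∑ j ∈ Finset.range (i + 2), b j * w i j)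
    (hwL : ∀ i < m, ∀ j, A ∣ b j * (d i * w i j))
    (hwl : ∀ i < m, A ∣ b (i + 1) * w i (i + 1) - l i) :
    (∀ y : ℕ → R, A ∣ ∑ j ∈ Finset.range (m + 1), b j * y j →
      ∃ t : ℕ → R, ∀ j < m + 1, A ∣ b j * (y j - ∑ i ∈ Finset.range m, t i * w i j)) ∧
    (∀ t : ℕ → R, (∀ j < m + 1, A ∣ b j * ∑ i ∈ Finset.range m, t i * w i j) →
      ∀ i < m, d i ∣ t i) := by
  induction m with
  | zero =>
    refine ⟨fun y hy => ⟨0, fun j hj => ?_⟩, fun t _ i hi => absurd hi (by omega)⟩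
    obtain rfl : j = 0 := by omega
    simpa using hy
  | succ m ih =>
    have hlast : ∀ t : ℕ → R, ∑ i ∈ Finset.range m, t i * w i (m + 1) = 0 := by
      intro t
      refine Finset.sum_eq_zero fun i hi => ?_
      have := Finset.mem_range.1 hi
      rw [hw0 i (by omega) _ (by omega), mul_zero]
    obtain ⟨ih1, ih2⟩ := ih (fun i hi => hgA i (by omega)) (fun i hi => hgb i (by omega))
      (fun i hi => hcb i (by omega)) (fun i hi => hl i (by omega)) (fun i hi => hdl i (by omega))
      (fun i hi => hw0 i (by omega)) (fun i hi => hwK i (by omega)) (fun i hi => hwL i (by omega))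
      (fun i hi => hwl i (by omega))
    have hm := Nat.lt_succ_self m
    constructor
    · intro y hy
      have hgz : g m ∣ b (m + 1) * y (m + 1) := by
        have h1 := (hgA m hm).trans hy
        rw [Finset.sum_range_succ] at h1
        refine (dvd_add_right (Finset.dvd_sum fun j hj => ?_)).1 h1
        have := Finset.mem_range.1 hj
        exact (hgb m hm j (by omega)).mul_right _
      obtain ⟨τ, hτ⟩ := hl m hm _ hgz ((hcb m hm).mul_right _)
      have hl2 : A ∣ b (m + 1) * (y (m + 1) - τ * w m (m + 1)) := by
        have : b (m + 1) * (y (m + 1) - τ * w m (m + 1))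
          = - τ * (b (m + 1) * w m (m + 1) - l m) := by
          rw [mul_sub, hτ]; ring
        rw [this]
        exact (hwl m hm).mul_left _
      have hK2 : A ∣ ∑ j ∈ Finset.range (m + 1), b j * (y j - τ * w m j) := by
        have h1 : A ∣ ∑ j ∈ Finset.range (m + 2), b j * (y j - τ * w m j) := by
          have : ∑ j ∈ Finset.range (m + 2), b j * (y j - τ * w m j)
            = ∑ j ∈ Finset.range (m + 2), b j * y j
              - τ * ∑ j ∈ Finset.range (m + 2), b j * w m j := by
            rw [Finset.mul_sum, ← Finset.sum_sub_distrib]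
            exact Finset.sum_congr rfl fun _ _ => by ring
          rw [this]
          exact dvd_sub hy ((hwK m hm).mul_left _)
        rw [Finset.sum_range_succ] at h1
        exact (dvd_add_left hl2).1 h1
      obtain ⟨t, ht⟩ := ih1 (fun j => y j - τ * w m j) hK2
      refine ⟨fun i => if i = m then τ else t i, fun j hj => ?_⟩
      have hsum : ∑ i ∈ Finset.range (m + 1), (if i = m then τ else t i) * w i j
          = ∑ i ∈ Finset.range m, t i * w i j + τ * w m j := by
        rw [Finset.sum_range_succ, if_pos rfl]
        congr 1
        refine Finset.sum_congr rfl fun i hi => ?_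
        have := Finset.mem_range.1 hi
        rw [if_neg (by omega)]
      show A ∣ b j * (y j - ∑ i ∈ Finset.range (m + 1), (if i = m then τ else t i) * w i j)
      rw [hsum]
      by_cases hjm : j = m + 1
      · subst hjm
        rw [hlast, zero_add]; exact hl2
      · have := ht j (by omega)
        rwa [sub_sub, add_comm] at this
    · intro t ht
      have hdm : d m ∣ t m := by
        have h1 := ht (m + 1) (by omega)
        rw [Finset.sum_range_succ, hlast, zero_add] at h1
        have h2 : A ∣ t m * l m := by
          have : t m * l m = b (m + 1) * (t m * w m (m + 1))
            - t m * (b (m + 1) * w m (m + 1) - l m) := by ring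
          rw [this]
          exact dvd_sub h1 ((hwl m hm).mul_left _)
        rw [← hdl m hm] at h2
        refine (mul_dvd_mul_iff_right ?_).1 h2
        intro h0
        apply hA
        rw [← hdl m hm, h0, mul_zero]
      intro i hi
      by_cases him : i = m
      · rw [him]; exact hdm
      · refine ih2 t (fun j hj => ?_) i (by omega)
        have h1 := ht j (by omega)
        rw [Finset.sum_range_succ, mul_add] at h1
        refine (dvd_add_left ?_).1 h1
        obtain ⟨e, he⟩ := hdm
        have : b j * (t m * w m j) = e * (b j * (d m * w m j)) := by rw [he]; ring
        rw [this]
        exact (hwL m hm j).mul_left _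

theorem aux_bez {R : Type*} [CommRing R] (A : R) (b : ℕ → R) (n : ℕ) (T : Set R)
    (hT : ∀ x ∈ T, x = A ∨ ∃ j < n, x = b j) (z : R) (hz : z ∈ Ideal.span T) :
    ∃ (α : R) (ρ : ℕ → R), z = A * α + ∑ j ∈ Finset.range n, b j * ρ j := by
  induction hz using Submodule.span_induction with
  | mem x hx =>
    rcases hT x hx with rfl | ⟨j, hj, rfl⟩
    · exact ⟨1, 0, by simp⟩
    · exact ⟨0, Pi.single j 1, by simp [Pi.single_apply, hj]⟩
  | zero => exact ⟨0, 0, by simp⟩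
  | add x y _ _ hx hy =>
    obtain ⟨α, ρ, rfl⟩ := hx
    obtain ⟨α', ρ', rfl⟩ := hy
    refine ⟨α + α', ρ + ρ', ?_⟩
    simp only [Pi.add_apply, mul_add, Finset.sum_add_distrib]
    ring
  | smul r x _ hx =>
    obtain ⟨α, ρ, rfl⟩ := hx
    refine ⟨r * α, fun j => r * ρ j, ?_⟩
    rw [smul_eq_mul, mul_add, Finset.mul_sum]
    congr 1
    · ring
    · exact Finset.sum_congr rfl fun _ _ => by ring

theorem aux_w {R : Type*} [CommRing R] [IsDomain R] (A : R) (hA : A ≠ 0) (b : ℕ → R)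
    (i : ℕ) (g g' c d : R) (hgA : g ∣ A) (hgb : ∀ j ≤ i, g ∣ b j)
    (α : R) (ρ : ℕ → R) (hgz : g = A * α + ∑ j ∈ Finset.range (i + 1), b j * ρ j)
    (hcA : c ∣ A) (hcb : c ∣ b (i + 1)) (α' β : R) (hcz : c = A * α' + b (i + 1) * β)
    (hg'g : g' ∣ g) (hg'c : g' ∣ c) (x y : R) (hg' : g' = x * g + y * c)
    (hd : d * (c * g) = A * g') :
    ∃ (l : R) (w : ℕ → R), (∀ z, g ∣ z → c ∣ z → l ∣ z) ∧ d * l = A ∧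
      (∀ j, i + 1 < j → w j = 0) ∧ A ∣ ∑ j ∈ Finset.range (i + 2), b j * w j ∧
      (∀ j, A ∣ b j * (d * w j)) ∧ A ∣ b (i + 1) * w (i + 1) - l := by
  obtain ⟨h, hh⟩ := hg'g
  obtain ⟨k, hk⟩ := hg'c
  have hg0 : g' ≠ 0 := by
    rintro rfl
    rw [zero_mul] at hh
    rw [hh] at hgA
    exact hA (zero_dvd_iff.1 hgA)
  have hdl : d * (c * h) = A := by
    apply mul_right_cancel₀ hg0
    rw [← hd, hh]; ring
  have hgk : g * k = c * h := by rw [hh, hk]; ring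
  refine ⟨c * h, fun j => if j ≤ i then - (k * ρ j) else if j = i + 1 then β * h else 0,
    ?_, hdl, ?_, ?_, ?_, ?_⟩
  · rintro z ⟨r, hr⟩ ⟨s, hs⟩
    refine (mul_dvd_mul_iff_right hg0).1 ?_
    refine ⟨x * s + y * r, ?_⟩
    have e1 : c * h * g' = c * g := by rw [hh]; ring
    rw [e1]
    calc z * g' = x * g * z + y * c * z := by rw [hg']; ring
      _ = x * g * (c * s) + y * c * (g * r) := by rw [← hs, ← hr]
      _ = _ := by ring
  · intro j hj
    simp only
    rw [if_neg (by omega), if_neg (by omega)]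
  · rw [Finset.sum_range_succ]
    simp only [show ¬ (i + 1 ≤ i) by omega, if_false, if_true]
    have : ∑ j ∈ Finset.range (i + 1),
        b j * (if j ≤ i then - (k * ρ j) else if j = i + 1 then β * h else 0)
        = - k * ∑ j ∈ Finset.range (i + 1), b j * ρ j := by
      rw [Finset.mul_sum]
      refine Finset.sum_congr rfl fun j hj => ?_
      have := Finset.mem_range.1 hj
      rw [if_pos (by omega)]; ring
    rw [this]
    refine ⟨k * α - h * α', ?_⟩
    linear_combination (-k) * (-hgz) + h * (-hcz) - hgk
  · intro j
    by_cases hj : j ≤ i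
    · simp only [if_pos hj]
      obtain ⟨r, hr⟩ := hgb j hj
      refine ⟨- r * ρ j, ?_⟩
      rw [hr, ← hdl, ← hgk]; ring
    · simp only [if_neg hj]
      by_cases hj' : j = i + 1
      · simp only [if_pos hj']
        subst hj'
        refine ⟨1 - d * h * α', ?_⟩
        linear_combination (-d * h) * hcz + hdl
      · simp [if_neg hj']
  · simp only [show ¬ (i + 1 ≤ i) by omega, if_false, if_true]
    refine ⟨- (h * α'), ?_⟩
    linear_combination h * (-hcz)

/-- Theorem `S/U_1`: with `dᵢ = a₁(a₁,…,a_{i+1})/((a₁,a_{i+1})(a₁,…,aᵢ))`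
for `2 ≤ i ≤ n−1`, one has `S/U₁ ≅ R/Rd₂ ⊕ ⋯ ⊕ R/Rd_{n−1}`; moreover for
every prime `q` of `R`, the `q`-elementary divisors of `S/U₁` (i.e. the
elementary divisors of its `q`-primary component) are the `q`-parts of
`d₂,…,d_{n−1}`. Here `n = m + 2`; `v j = v(1, j+2)` and `u j = u(1, j+2)`
for `j : Fin (m+1)`, `c j` is a gcd of `a₁` and `a_{j+2}`, `g t` is a gcd of
`a₁,…,a_{t+1}`, and `d i` (paper index `i+2`) is defined by the
exact-division identity
`d i · ((a₁,a_{i+3})·(a₁,…,a_{i+2})) = a₁·(a₁,…,a_{i+3})`. -/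
theorem stmt_18 {R : Type*} [CommRing R] [IsDomain R] [IsPrincipalIdealRing R]
    {m : ℕ} (hm : 1 ≤ m) (a : Fin (m + 2) → R)
    (huni : Ideal.span (Set.range a) = ⊤) (ha1 : a 0 ≠ 0)
    (S : Submodule R (Fin (m + 2) → R))
    (hS : ∀ x, x ∈ S ↔ ∑ i, a i * x i = 0)
    (v : Fin (m + 1) → Fin (m + 2) → R)
    (hv : ∀ j k, v j k = if k = 0 then -a j.succ else if k = j.succ then a 0 else 0)
    (c : Fin (m + 1) → R) (hc : ∀ j, Ideal.span {c j} = Ideal.span {a 0, a j.succ})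
    (u : Fin (m + 1) → Fin (m + 2) → R)
    (hu : ∀ j, c j • u j = v j)
    (U1 : Submodule R (Fin (m + 2) → R))
    (hU1 : U1 = Submodule.span R (Set.range u))
    (g : ℕ → R)
    (hg : ∀ t, Ideal.span {g t} =
      Ideal.span {x | ∃ i : Fin (m + 2), (i : ℕ) ≤ t ∧ x = a i})
    (d : Fin m → R)
    (hd : ∀ i : Fin m, d i * (c i.succ * g ((i : ℕ) + 1)) = a 0 * g ((i : ℕ) + 2)) :
    Nonempty ((S ⧸ Submodule.comap S.subtype U1) ≃ₗ[R]
      ((i : Fin m) → R ⧸ Ideal.span {d i})) ∧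
    ∀ q : R, Prime q →
      ∀ P : Submodule R (S ⧸ Submodule.comap S.subtype U1),
        (∀ x, x ∈ P ↔ ∃ s : ℕ, q ^ s • x = 0) →
        ∃ k : Fin m → ℕ, (∀ i, q ^ k i ∣ d i ∧ ¬ q ^ (k i + 1) ∣ d i) ∧
          Nonempty (P ≃ₗ[R] ((i : Fin m) → R ⧸ Ideal.span {q ^ k i})) := by
  have hA : ∀ t, g t ∣ a 0 := fun t => by
    rw [← Ideal.mem_span_singleton, hg]
    exact Ideal.subset_span ⟨0, by simp, rfl⟩
  have hga : ∀ t (j : Fin (m + 2)), (j : ℕ) ≤ t → g t ∣ a j := fun t j hj => by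
    rw [← Ideal.mem_span_singleton, hg]
    exact Ideal.subset_span ⟨j, hj, rfl⟩
  have hg0 : ∀ t, g t ≠ 0 := fun t h => ha1 (zero_dvd_iff.1 (h ▸ hA t))
  have hcA : ∀ j, c j ∣ a 0 := fun j => by
    rw [← Ideal.mem_span_singleton, hc]
    exact Ideal.subset_span (by simp)
  have hca : ∀ j, c j ∣ a j.succ := fun j => by
    rw [← Ideal.mem_span_singleton, hc]
    exact Ideal.subset_span (by simp)
  have hc0 : ∀ j, c j ≠ 0 := fun j h => ha1 (zero_dvd_iff.1 (h ▸ hcA j))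
  have hcz : ∀ j, ∃ α β, c j = a 0 * α + a j.succ * β := fun j => by
    have : c j ∈ Ideal.span {a 0, a j.succ} := by
      rw [← hc]; exact Ideal.mem_span_singleton_self _
    obtain ⟨α, β, h⟩ := Ideal.mem_span_pair.1 this
    exact ⟨α, β, by rw [← h]; ring⟩
  have hd0 : ∀ i, d i ≠ 0 := fun i h => by
    have := hd i
    rw [h, zero_mul] at this
    exact mul_ne_zero ha1 (hg0 _) this.symm
  -- extension to ℕ
  obtain ⟨b, hb⟩ : ∃ b : ℕ → R, ∀ j : Fin (m + 1), b j = a j.succ :=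
    ⟨fun j => if h : j < m + 1 then a (Fin.succ ⟨j, h⟩) else 0, fun j => dif_pos j.2⟩
  have hbez : ∀ t, ∃ (α : R) (ρ : ℕ → R),
      g t = a 0 * α + ∑ j ∈ Finset.range t, b j * ρ j := by
    intro t
    refine aux_bez (a 0) b t {x | ∃ i : Fin (m + 2), (i : ℕ) ≤ t ∧ x = a i} ?_ (g t)
      (by rw [← hg]; exact Ideal.mem_span_singleton_self _)
    rintro x ⟨i, hi, rfl⟩
    induction i using Fin.cases with
    | zero => exact Or.inl rfl
    | succ j =>
      rw [Fin.val_succ] at hi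
      exact Or.inr ⟨j, by omega, (hb j).symm⟩
  have hgb : ∀ (i : Fin m) (j : ℕ), j ≤ i → g (i + 1) ∣ b j := by
    intro i j hj
    have hj' : j < m + 1 := by omega
    have := hb ⟨j, hj'⟩
    simp only at this
    rw [this]
    exact hga _ _ (by simp; omega)
  have hex : ∀ i : Fin m, ∃ (l : R) (w : ℕ → R),
      (∀ z, g (i + 1) ∣ z → c i.succ ∣ z → l ∣ z) ∧ d i * l = a 0 ∧
      (∀ j, (i : ℕ) + 1 < j → w j = 0) ∧ a 0 ∣ ∑ j ∈ Finset.range (i + 2), b j * w j ∧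
      (∀ j, a 0 ∣ b j * (d i * w j)) ∧ a 0 ∣ b (i + 1) * w (i + 1) - l := by
    intro i
    have hbi : b (i + 1) = a i.succ.succ := by rw [← hb]; simp
    obtain ⟨α, ρ, h1⟩ := hbez (i + 1)
    obtain ⟨α', β, h2⟩ := hcz i.succ
    have h3 : g (i + 2) ∈ Ideal.span {g (i + 1), c i.succ} := by
      have : g (i + 2) ∈ Ideal.span {g (i + 2)} := Ideal.mem_span_singleton_self _
      rw [hg] at this
      refine Ideal.span_le.2 ?_ this
      rintro x ⟨j, hj, rfl⟩
      by_cases hj' : (j : ℕ) ≤ i + 1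
      · exact Ideal.mem_of_dvd _ (hga _ _ hj') (Ideal.subset_span (by simp))
      · have : j = i.succ.succ := by ext; simp; omega
        rw [this]
        exact Ideal.mem_of_dvd _ (hca _) (Ideal.subset_span (by simp))
    obtain ⟨x, y, h4⟩ := Ideal.mem_span_pair.1 h3
    refine aux_w (a 0) ha1 b i (g (i + 1)) (g (i + 2)) (c i.succ) (d i) (hA _) (hgb i) α ρ h1
      (hcA _) (hbi ▸ hca _) α' β (by rw [hbi]; exact h2) ?_ ?_ x y h4.symm (hd i)
    · rw [h1]
      refine dvd_add ((hA _).mul_right _) (Finset.dvd_sum fun j hj => ?_)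
      have hj1 := Finset.mem_range.1 hj
      have hj' : j < m + 1 := by omega
      have := hb ⟨j, hj'⟩
      simp only at this
      rw [this]
      exact (hga _ _ (by simp; omega)).mul_right _
    · rw [h2]
      exact dvd_add ((hA _).mul_right _) ((hga _ _ (by simp)).mul_right _)
  choose l w hl hdl hw0 hwK hwL hwl using hex
  -- extend
  have hext : ∀ {β : Type _} (f : Fin m → β) (z : β), ∃ F : ℕ → β, ∀ i : Fin m, F i = f i :=
    fun f z => ⟨fun j => if h : j < m then f ⟨j, h⟩ else z, fun j => by simp⟩
  obtain ⟨G, hG⟩ := hext (fun i => g (i + 1)) 0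
  obtain ⟨C, hC⟩ := hext (fun i => c i.succ) 0
  obtain ⟨D, hD⟩ := hext d 0
  obtain ⟨L, hL⟩ := hext l 0
  obtain ⟨W, hW⟩ := hext w 0
  obtain ⟨I1, I2⟩ := aux_ind (a 0) ha1 b G C D L W m
    (fun i hi => by rw [hG ⟨i, hi⟩]; exact hA _)
    (fun i hi => by rw [hG ⟨i, hi⟩]; exact hgb ⟨i, hi⟩)
    (fun i hi => by
      rw [hC ⟨i, hi⟩]
      have := hb (Fin.succ ⟨i, hi⟩)
      simp only [Fin.val_succ] at this
      rw [this]; exact hca _)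
    (fun i hi => by rw [hG ⟨i, hi⟩, hC ⟨i, hi⟩, hL ⟨i, hi⟩]; exact hl _)
    (fun i hi => by rw [hD ⟨i, hi⟩, hL ⟨i, hi⟩]; exact hdl _)
    (fun i hi => by rw [hW ⟨i, hi⟩]; exact hw0 ⟨i, hi⟩)
    (fun i hi => by rw [hW ⟨i, hi⟩]; exact hwK ⟨i, hi⟩)
    (fun i hi => by rw [hW ⟨i, hi⟩, hD ⟨i, hi⟩]; exact hwL ⟨i, hi⟩)
    (fun i hi => by rw [hW ⟨i, hi⟩, hL ⟨i, hi⟩]; exact hwl ⟨i, hi⟩)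
  -- vectors in S
  have hS' : ∀ x, x ∈ S ↔ a 0 * x 0 + ∑ j : Fin (m + 1), a j.succ * x j.succ = 0 := fun x => by
    rw [hS, Fin.sum_univ_succ]
  have hlift : ∀ i : Fin m, ∃ s : S, ∀ j : Fin (m + 1), (s : Fin (m + 2) → R) j.succ = w i j := by
    intro i
    have hK : a 0 ∣ ∑ j : Fin (m + 1), a j.succ * w i j := by
      have e1 : ∑ j : Fin (m + 1), a j.succ * w i j
          = ∑ j ∈ Finset.range (m + 1), b j * w i j := by
        rw [Finset.sum_range]
        exact Finset.sum_congr rfl fun j _ => by rw [hb]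
      rw [e1, ← Finset.sum_subset (Finset.range_mono (show (i : ℕ) + 2 ≤ m + 1 by omega))]
      · exact hwK i
      · intro j _ hj
        rw [Finset.mem_range] at hj
        rw [hw0 i j (by omega), mul_zero]
    obtain ⟨r, hr⟩ := hK
    refine ⟨⟨Fin.cons (-r) (fun j => w i j), ?_⟩, fun j => by simp⟩
    rw [hS']
    simp only [Fin.cons_zero, Fin.cons_succ]
    rw [hr]; ring
  choose s hs using hlift
  have hu0 : ∀ j k : Fin (m + 1), k ≠ j → u j k.succ = 0 := fun j k hk => by
    have := congrFun (hu j) k.succ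
    rw [hv, if_neg (Fin.succ_ne_zero k), if_neg (fun h => hk (Fin.succ_injective _ h)),
      Pi.smul_apply, smul_eq_mul] at this
    exact (mul_eq_zero.1 this).resolve_left (hc0 j)
  have hu1 : ∀ j : Fin (m + 1), c j * u j j.succ = a 0 := fun j => by
    have := congrFun (hu j) j.succ
    rwa [hv, if_neg (Fin.succ_ne_zero j), if_pos rfl, Pi.smul_apply, smul_eq_mul] at this
  have huz : ∀ j : Fin (m + 1), c j * u j 0 = - a j.succ := fun j => by
    have := congrFun (hu j) 0
    rwa [hv, if_pos rfl, Pi.smul_apply, smul_eq_mul] at this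
  have huS : ∀ j, u j ∈ S := fun j => by
    rw [hS', Finset.sum_eq_single j (fun k _ hk => by rw [hu0 j k hk, mul_zero]) (by simp)]
    apply mul_left_cancel₀ (hc0 j)
    linear_combination a 0 * huz j + a j.succ * hu1 j
  have hsumu : ∀ (t : Fin (m + 1) → R) (k : Fin (m + 1)),
      (∑ j, t j • u j) k.succ = t k * u k k.succ := fun t k => by
    rw [Finset.sum_apply, Finset.sum_eq_single k]
    · rfl
    · intro j _ hj
      rw [Pi.smul_apply, hu0 j k hj.symm, smul_zero]
    · simp
  have hUmem : ∀ x ∈ S, (x ∈ U1 ↔ ∀ j : Fin (m + 1), a 0 ∣ a j.succ * x j.succ) := by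
    intro x hx
    rw [hU1, Submodule.mem_span_range_iff_exists_fun]
    constructor
    · rintro ⟨t, rfl⟩ j
      rw [hsumu]
      obtain ⟨e, he⟩ := hca j
      refine ⟨e * t j, ?_⟩
      rw [he]
      linear_combination e * t j * hu1 j
    · intro h
      have : ∀ j : Fin (m + 1), ∃ t, x j.succ = t * u j j.succ := fun j => by
        obtain ⟨α, β, h2⟩ := hcz j
        obtain ⟨e, he⟩ := h j
        refine ⟨x j.succ * α + e * β, mul_left_cancel₀ (hc0 j) ?_⟩
        linear_combination x j.succ * h2 + β * he - (x j.succ * α + e * β) * hu1 j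
      choose t ht using this
      refine ⟨t, ?_⟩
      have hy : x - ∑ j, t j • u j ∈ S :=
        S.sub_mem hx (S.sum_mem fun j _ => S.smul_mem _ (huS j))
      have hy1 : ∀ k : Fin (m + 1), (x - ∑ j, t j • u j) k.succ = 0 := fun k => by
        rw [Pi.sub_apply, hsumu, ht, sub_self]
      rw [hS'] at hy
      simp only [hy1, mul_zero, Finset.sum_const_zero, add_zero] at hy
      have hy0 := (mul_eq_zero.1 hy).resolve_left ha1
      symm
      rw [← sub_eq_zero]
      funext k
      induction k using Fin.cases with
      | zero => exact hy0
      | succ k => exact hy1 k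
  -- the map
  let N := Submodule.comap S.subtype U1
  let φ0 : (Fin m → R) →ₗ[R] S := Fintype.linearCombination R s
  have hφ0 : ∀ t (j : Fin (m + 1)),
      (φ0 t : Fin (m + 2) → R) j.succ = ∑ i, t i * w i j := fun t j => by
    simp [φ0, Fintype.linearCombination_apply, hs, Finset.sum_apply]
  let φ : (Fin m → R) →ₗ[R] (S ⧸ N) := N.mkQ ∘ₗ φ0
  have hφ : Function.Surjective φ := by
    intro x
    obtain ⟨x, rfl⟩ := N.mkQ_surjective x
    obtain ⟨y, hy⟩ : ∃ y : ℕ → R, ∀ j : Fin (m + 1), y j = x.1 j.succ :=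
      ⟨fun j => if h : j < m + 1 then x.1 (Fin.succ ⟨j, h⟩) else 0, fun j => dif_pos j.2⟩
    obtain ⟨t, ht⟩ := I1 y (by
      have := (hS' x.1).1 x.2
      rw [Finset.sum_range]
      simp only [hb, hy]
      exact ⟨- x.1 0, by linear_combination this⟩)
    refine ⟨fun i => t i, ?_⟩
    symm
    show N.mkQ x = N.mkQ (φ0 _)
    rw [← sub_eq_zero, ← map_sub, Submodule.mkQ_apply, Submodule.Quotient.mk_eq_zero]
    show ((x - φ0 fun i => t i : S) : Fin (m + 2) → R) ∈ U1
    rw [hUmem _ (x - φ0 fun i => t i : S).2]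
    intro j
    have := ht j j.2
    rw [Finset.sum_range] at this
    simp only [hW, hb, hy] at this
    rw [Submodule.coe_sub, Pi.sub_apply, hφ0]
    exact this
  have hφk : ∀ t, φ t = 0 ↔ ∀ i, d i ∣ t i := by
    intro t
    have e : φ t = 0 ↔ ∀ j : Fin (m + 1), a 0 ∣ a j.succ * ∑ i, t i * w i j := by
      show N.mkQ (φ0 t) = 0 ↔ _
      rw [Submodule.mkQ_apply, Submodule.Quotient.mk_eq_zero]
      show ((φ0 t : S) : Fin (m + 2) → R) ∈ U1 ↔ _
      rw [hUmem _ (φ0 t).2]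
      simp only [hφ0]
    rw [e]
    constructor
    · intro h i
      obtain ⟨T, hT⟩ := hext t 0
      have := I2 T (fun j hj => by
        rw [Finset.sum_range]
        have h1 := h ⟨j, hj⟩
        rw [← hb] at h1
        simpa only [hT, hW] using h1) i i.2
      rwa [hT, hD] at this
    · intro h j
      rw [Finset.mul_sum]
      refine Finset.dvd_sum fun i _ => ?_
      obtain ⟨r, hr⟩ := h i
      have h1 : a j.succ * (t i * w i j) = r * (b j * (d i * w i j)) := by
        rw [hr, hb]; ring
      rw [h1]
      exact (hwL i j).mul_left _
  exact ⟨aux_quot d φ hφ hφk, fun q hq P hP => aux_prim d hd0 φ hφ hφk q hq P hP⟩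
end
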